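/- arXiv:1902.01916 — 3 statements merged into one kernel-verified Lean document; each statement's English description precedes it below -/
import Mathlib

section
/- For every prime p, every subset of (Z/pZ)^3 that tiles (Z/pZ)^3 by translation is spectral. -/
/-!
Write `Ê(ξ) = ∑_{x ∈ E} ψ(ξ · x)` for the standard additive character `ψ` of `ℤ/pℤ`. If `E` tiles
with translation set `T`, then `|E| |T| = p³` and `Ê(ξ) T̂(ξ) = 0` for every `ξ ≠ 0`
(`Tiles.hat_mul_hat`). As the cyclotomic polynomial of index `p` is irreducible over `ℚ`, `Ê(ξ) = 0`
exactly when all the fibres of `x ↦ ξ · x` on `E` have the same size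
(`exists_card_fiber_of_sum_eq_zero`); in particular the zeros of `Ê` are stable under nonzero scaling.
By cardinality `|E|` is one of `1`, `p`, `p²`, `p³`.

* If `|E|` is `1` or `p³`, the spectrum is `{0}` or the whole space.
* If `|E| = p`, then `Ê` has a zero `ξ ≠ 0`: otherwise `T̂` vanishes off the origin, which by Fourier
  inversion forces `T` to be everything (`eq_univ_of_hat_eq_zero`). The line through `ξ` is a spectrum.
* If `|E| = p²`, then `|T| = p`; pick `t ≠ t'` in `T`. For `ξ ≠ 0` orthogonal to `t - t'` the map
  `x ↦ ξ · x` is not injective on `T`, so its `p` fibres are not all singletons and `T̂(ξ) ≠ 0`. Hence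
  `Ê` vanishes on the punctured plane `(t - t')^⊥`, and this plane is a spectrum.
-/

/-- `E ⊆ (ℤ/pℤ)^d` is spectral: there is a set `A` with `|A| = |E|` such that the
characters `x ↦ exp(2πi (a·x)/p)` for `a ∈ A`, restricted to `E`, are pairwise
orthogonal. -/
def Spectral (p d : ℕ) (E : Finset (Fin d → ZMod p)) : Prop :=
  ∃ A : Finset (Fin d → ZMod p), A.card = E.card ∧
    ∀ a ∈ A, ∀ a' ∈ A, a ≠ a' →
      ∑ x ∈ E, Complex.exp (2 * Real.pi * Complex.I *
        (((∑ i, (a i - a' i) * x i : ZMod p).val : ℂ) / (p : ℂ))) = 0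

/-- `E ⊆ (ℤ/pℤ)^d` tiles by translation: there is a set `T` such that every `z`
is uniquely `e + t` with `e ∈ E`, `t ∈ T`. -/
def Tiles (p d : ℕ) (E : Finset (Fin d → ZMod p)) : Prop :=
  ∃ T : Finset (Fin d → ZMod p), ∀ z : Fin d → ZMod p,
    ∃! et : (Fin d → ZMod p) × (Fin d → ZMod p),
      et.1 ∈ E ∧ et.2 ∈ T ∧ z = et.1 + et.2

namespace TileSpectral

open Finset Polynomial

/-- The Fourier transform of the indicator function of `S`, without normalisation. -/
noncomputable def hat {p d : ℕ} [NeZero p] (S : Finset (Fin d → ZMod p)) (ξ : Fin d → ZMod p) : ℂ :=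
  ∑ x ∈ S, ZMod.stdAddChar (ξ ⬝ᵥ x)

lemma spectral_of_hat {p d : ℕ} [NeZero p] {E : Finset (Fin d → ZMod p)}
    (A : Finset (Fin d → ZMod p)) (hcard : A.card = E.card)
    (h : ∀ a ∈ A, ∀ a' ∈ A, a ≠ a' → hat E (a - a') = 0) : Spectral p d E := by
  refine ⟨A, hcard, fun a ha a' ha' hne => ?_⟩
  rw [← h a ha a' ha' hne, hat]
  refine sum_congr rfl fun x _ => ?_
  rw [ZMod.stdAddChar_apply, ZMod.toCircle_apply]
  simp only [dotProduct, Pi.sub_apply]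
  congr 1
  ring

/-- The only rational linear relation between the `p`-th roots of unity, up to scaling, is that
their sum vanishes, so a vanishing sum of values of `ψ` takes every value equally often. -/
lemma exists_card_fiber_of_sum_eq_zero {p : ℕ} [hp : Fact p.Prime] {V : Type*} (S : Finset V)
    (g : V → ZMod p) (h : ∑ x ∈ S, (ZMod.stdAddChar (g x) : ℂ) = 0) :
    ∃ c : ℕ, (∀ b, #{x ∈ S | g x = b} = c) ∧ #S = p * c := by
  suffices H : ∃ c : ℕ, ∀ b, #{x ∈ S | g x = b} = c by
    obtain ⟨c, hc⟩ := H
    refine ⟨c, hc, ?_⟩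
    rw [card_eq_sum_card_fiberwise (f := g) (t := univ) (by simp)]
    simp [hc, ZMod.card]
  set ζ : ℂ := Complex.exp (2 * Real.pi * Complex.I / p) with hζ
  have hprim : IsPrimitiveRoot ζ p := Complex.isPrimitiveRoot_exp p hp.out.ne_zero
  have hchar : ∀ b : ZMod p, (ZMod.stdAddChar b : ℂ) = ζ ^ b.val := by
    intro b
    rw [ZMod.stdAddChar_apply, ZMod.toCircle_apply, hζ, ← Complex.exp_nat_mul]
    congr 1
    ring
  -- The relation as a polynomial of degree `< p` whose coefficients are the sizes of the fibres.
  set P : ℚ[X] := ∑ b : ZMod p, C (#{x ∈ S | g x = b} : ℚ) * X ^ b.val with hP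
  have hcoeff : ∀ b : ZMod p, P.coeff b.val = #{x ∈ S | g x = b} := by
    intro b
    simp only [hP, finsetSum_coeff, coeff_C_mul, coeff_X_pow]
    rw [sum_eq_single b]
    · simp
    · intro b' _ hne
      rw [if_neg (fun he => hne (ZMod.val_injective p he.symm)), mul_zero]
    · simp
  have hroot : aeval ζ P = 0 := by
    rw [← h, ← sum_fiberwise S g, hP, map_sum]
    refine sum_congr rfl fun b _ => ?_
    rw [sum_congr rfl (g := fun _ => ζ ^ b.val)
      (fun x hx => by rw [(mem_filter.1 hx).2, hchar])]
    simp
  have hdvd : cyclotomic p ℚ ∣ P := by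
    rw [cyclotomic_eq_minpoly_rat hprim hp.out.pos]
    exact minpoly.dvd ℚ ζ hroot
  have hdeg : P.natDegree ≤ p - 1 := by
    refine natDegree_sum_le_of_forall_le _ _ fun b _ => ?_
    exact (natDegree_C_mul_X_pow_le _ _).trans (Nat.le_sub_one_of_lt (ZMod.val_lt b))
  obtain ⟨Q, hQ⟩ := hdvd
  have hQC : ∃ a, Q = C a := by
    by_cases hQ0 : Q = 0
    · exact ⟨0, by simp [hQ0]⟩
    · refine ⟨Q.coeff 0, eq_C_of_natDegree_eq_zero ?_⟩
      have := natDegree_mul (cyclotomic_ne_zero p ℚ) hQ0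
      rw [← hQ, natDegree_cyclotomic, Nat.totient_prime hp.out] at this
      omega
  obtain ⟨a, rfl⟩ := hQC
  have hall : ∀ b : ZMod p, (#{x ∈ S | g x = b} : ℚ) = a := by
    intro b
    rw [← hcoeff, hQ, cyclotomic_prime, coeff_mul_C]
    simp [finsetSum_coeff, coeff_X_pow, ZMod.val_lt]
  refine ⟨#{x ∈ S | g x = 0}, fun b => ?_⟩
  have := (hall b).trans (hall 0).symm
  exact_mod_cast this

lemma sum_stdAddChar {p : ℕ} [hp : Fact p.Prime] {c : ZMod p} (hc : c ≠ 0) :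
    ∑ b : ZMod p, (ZMod.stdAddChar (c * b) : ℂ) = 0 := by
  have := AddChar.sum_mulShift (R' := ℂ) c (ZMod.isPrimitive_stdAddChar p)
  simpa [hc, mul_comm] using this

lemma hat_smul {p d : ℕ} [hp : Fact p.Prime] {S : Finset (Fin d → ZMod p)} {ξ : Fin d → ZMod p}
    (h : hat S ξ = 0) {c : ZMod p} (hc : c ≠ 0) : hat S (c • ξ) = 0 := by
  obtain ⟨n, hn, -⟩ := exists_card_fiber_of_sum_eq_zero S (fun x => ξ ⬝ᵥ x) h
  rw [hat, ← sum_fiberwise S (fun x => ξ ⬝ᵥ x)]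
  calc _ = ∑ b : ZMod p, (n : ℂ) * ZMod.stdAddChar (c * b) := by
        refine sum_congr rfl fun b _ => ?_
        rw [sum_congr rfl (g := fun _ => (ZMod.stdAddChar (c * b) : ℂ))
          (fun x hx => by rw [smul_dotProduct, (mem_filter.1 hx).2, smul_eq_mul])]
        simp [hn]
    _ = 0 := by rw [← mul_sum, sum_stdAddChar hc, mul_zero]

lemma hat_univ {p d : ℕ} [hp : Fact p.Prime] {ξ : Fin d → ZMod p} (hξ : ξ ≠ 0) :
    hat univ ξ = 0 := by
  obtain ⟨i, hi⟩ := Function.ne_iff.1 hξ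
  -- Translating by the `i`-th unit vector multiplies the sum by `ψ (ξ i) ≠ 1`.
  have hne : (ZMod.stdAddChar (ξ i) : ℂ) ≠ 1 := by
    intro h1
    apply hi
    apply ZMod.injective_stdAddChar (N := p)
    simpa using h1
  have hshift : hat univ ξ = ZMod.stdAddChar (ξ i) * hat univ ξ := by
    conv_lhs => rw [hat, ← Equiv.sum_comp (Equiv.addLeft (Pi.single i (1 : ZMod p)))]
    rw [hat, mul_sum]
    refine sum_congr rfl fun x _ => ?_
    simp [dotProduct_add, AddChar.map_add_eq_mul]
  have : (ZMod.stdAddChar (ξ i) - 1) * hat univ ξ = 0 := by linear_combination -hshift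
  exact (mul_eq_zero.1 this).resolve_left (sub_ne_zero.2 hne)

/-- A nonempty set whose Fourier transform is supported at the origin is the whole space, by
Fourier inversion at a point outside the set. -/
lemma eq_univ_of_hat_eq_zero {p d : ℕ} [hp : Fact p.Prime] {S : Finset (Fin d → ZMod p)}
    (hS : S.Nonempty) (h : ∀ ξ, ξ ≠ 0 → hat S ξ = 0) : S = univ := by
  by_contra hne
  obtain ⟨x, hx⟩ : ∃ x, x ∉ S := by
    by_contra! hall
    exact hne (eq_univ_iff_forall.2 hall)
  have h1 : ∑ ξ, ZMod.stdAddChar (-(ξ ⬝ᵥ x)) * hat S ξ = #S := by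
    rw [sum_eq_single 0]
    · simp [hat]
    · intro ξ _ hξ
      rw [h ξ hξ, mul_zero]
    · simp
  have h2 : ∑ ξ, ZMod.stdAddChar (-(ξ ⬝ᵥ x)) * hat S ξ = 0 := by
    simp only [hat, mul_sum]
    rw [sum_comm]
    refine sum_eq_zero fun t ht => ?_
    have htx : t - x ≠ 0 := sub_ne_zero.2 fun he => hx (he ▸ ht)
    rw [← hat_univ htx, hat]
    refine sum_congr rfl fun ξ _ => ?_
    rw [← AddChar.map_add_eq_mul, dotProduct_comm (t - x), dotProduct_sub]
    congr 1
    ring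
  rw [h2] at h1
  have : #S = 0 := by exact_mod_cast h1.symm
  exact hS.ne_empty (card_eq_zero.1 this)

lemma card_orthogonal {p : ℕ} [hp : Fact p.Prime] {v : Fin 3 → ZMod p} (hv : v ≠ 0) :
    #{a : Fin 3 → ZMod p | v ⬝ᵥ a = 0} = p ^ 2 := by
  obtain ⟨c, hc, hcard⟩ := exists_card_fiber_of_sum_eq_zero univ (fun x => v ⬝ᵥ x) (hat_univ hv)
  rw [hc 0]
  have h3 : p ^ 3 = p * c := by simpa [ZMod.card] using hcard
  have : p * c = p * p ^ 2 := by rw [← h3]; ring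
  exact Nat.eq_of_mul_eq_mul_left hp.out.pos this

lemma sum_sum_of_tiling {p d : ℕ} [NeZero p] {E T : Finset (Fin d → ZMod p)}
    (h : ∀ z : Fin d → ZMod p, ∃! et : (Fin d → ZMod p) × (Fin d → ZMod p),
      et.1 ∈ E ∧ et.2 ∈ T ∧ z = et.1 + et.2) {M : Type*} [AddCommMonoid M]
    (f : (Fin d → ZMod p) → M) : ∑ e ∈ E, ∑ t ∈ T, f (e + t) = ∑ z, f z := by
  rw [← sum_product']
  refine sum_bij (fun et _ => et.1 + et.2) (by simp) ?_ ?_ (by simp)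
  · intro a ha b hb hab
    rw [mem_product] at ha hb
    exact (h (a.1 + a.2)).unique ⟨ha.1, ha.2, rfl⟩ ⟨hb.1, hb.2, hab⟩
  · intro z _
    obtain ⟨et, ⟨h1, h2, h3⟩, -⟩ := h z
    exact ⟨et, mem_product.2 ⟨h1, h2⟩, h3.symm⟩

end TileSpectral

open Finset TileSpectral in
/-- The product `Ê(ξ) T̂(ξ)` is the Fourier transform of the convolution of the indicator functions,
which for a tiling is the constant function `1`. -/
lemma Tiles.hat_mul_hat {p d : ℕ} [hp : Fact p.Prime] {E : Finset (Fin d → ZMod p)}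
    (hE : Tiles p d E) : ∃ T : Finset (Fin d → ZMod p), #E * #T = p ^ d ∧
      ∀ ξ, ξ ≠ 0 → hat E ξ * hat T ξ = 0 := by
  obtain ⟨T, hT⟩ := hE
  refine ⟨T, ?_, fun ξ hξ => ?_⟩
  · simpa [ZMod.card] using sum_sum_of_tiling hT (fun _ => (1 : ℕ))
  · rw [← hat_univ hξ, hat, hat, sum_mul_sum, hat,
      ← sum_sum_of_tiling hT (fun z => (ZMod.stdAddChar (ξ ⬝ᵥ z) : ℂ))]
    simp only [dotProduct_add, AddChar.map_add_eq_mul]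

open Finset TileSpectral in
/-- For every prime `p`, every subset of `(ℤ/pℤ)^3` that tiles by translation is
spectral. -/
theorem tiles_implies_spectral_dim3 (p : ℕ) (hp : p.Prime)
    (E : Finset (Fin 3 → ZMod p)) (hE : Tiles p 3 E) : Spectral p 3 E := by
  have : Fact p.Prime := ⟨hp⟩
  obtain ⟨T, hcard, hmul⟩ := hE.hat_mul_hat
  obtain ⟨k, hk, hEk⟩ := (Nat.dvd_prime_pow hp).1 (Dvd.intro _ hcard)
  interval_cases k
  · -- `#E = 1`
    refine spectral_of_hat {0} (by simp [hEk]) fun a ha a' ha' hne => ?_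
    rw [mem_singleton] at ha ha'
    exact absurd (ha.trans ha'.symm) hne
  · -- `#E = p`
    have hTcard : #T = p ^ 2 := by
      rw [hEk] at hcard
      refine Nat.eq_of_mul_eq_mul_left hp.pos (?_ : p * #T = p * p ^ 2)
      linarith
    obtain ⟨ξ, hξ, hE0⟩ : ∃ ξ, ξ ≠ 0 ∧ hat E ξ = 0 := by
      by_contra! hno
      have hTne : T.Nonempty := card_pos.1 (hTcard ▸ pow_pos hp.pos 2)
      have huniv := eq_univ_of_hat_eq_zero hTne fun ξ hξ =>
        (mul_eq_zero.1 (hmul ξ hξ)).resolve_left (hno ξ hξ)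
      rw [huniv] at hTcard
      have h32 : p ^ 3 = p ^ 2 := by simpa [ZMod.card] using hTcard
      have := Nat.pow_right_injective hp.two_le h32
      omega
    have hinj : Function.Injective fun c : ZMod p => c • ξ := smul_left_injective _ hξ
    refine spectral_of_hat (univ.image fun c : ZMod p => c • ξ) ?_ ?_
    · rw [card_image_of_injective _ hinj, hEk]
      simp [ZMod.card]
    · intro a ha a' ha' hne
      obtain ⟨c, -, rfl⟩ := mem_image.1 ha
      obtain ⟨c', -, rfl⟩ := mem_image.1 ha'
      rw [← sub_smul]
      exact hat_smul hE0 (sub_ne_zero.2 fun h => hne (by rw [h]))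
  · -- `#E = p ^ 2`
    have hTcard : #T = p := by
      rw [hEk] at hcard
      refine Nat.eq_of_mul_eq_mul_left (pow_pos hp.pos 2) (?_ : p ^ 2 * #T = p ^ 2 * p)
      linarith
    obtain ⟨t, ht, t', ht', htt⟩ := one_lt_card.1 (hTcard ▸ hp.one_lt)
    refine spectral_of_hat ({a | (t - t') ⬝ᵥ a = 0} : Finset _) ?_ ?_
    · rw [card_orthogonal (sub_ne_zero.2 htt), hEk]
    · intro a ha a' ha' hne
      rw [mem_filter] at ha ha'
      refine (mul_eq_zero.1 (hmul _ (sub_ne_zero.2 hne))).resolve_right fun hT0 => ?_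
      obtain ⟨c, hc, hpc⟩ := exists_card_fiber_of_sum_eq_zero T (fun x => (a - a') ⬝ᵥ x) hT0
      have hc1 : c = 1 := by
        rw [hTcard] at hpc
        exact Nat.eq_of_mul_eq_mul_left hp.pos (by linarith)
      -- `t` and `t'` lie in the same fibre, which should be a singleton.
      have horth : (a - a') ⬝ᵥ t = (a - a') ⬝ᵥ t' := by
        rw [← sub_eq_zero, ← dotProduct_sub, dotProduct_comm, dotProduct_sub, ha.2, ha'.2, sub_zero]
      have hle : #{x ∈ T | (a - a') ⬝ᵥ x = (a - a') ⬝ᵥ t'} ≤ 1 := by rw [hc, hc1]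
      exact htt (card_le_one.1 hle t (mem_filter.2 ⟨ht, horth⟩) t' (mem_filter.2 ⟨ht', rfl⟩))
  · -- `#E = p ^ 3`
    have huniv : E = univ := by
      rw [← card_eq_iff_eq_univ, hEk]
      simp [ZMod.card]
    subst huniv
    exact spectral_of_hat univ rfl fun a _ a' _ hne => hat_univ (sub_ne_zero.2 hne)
end

section
/- Let p be a prime and m an integer with 1 < m < p. If there exists an mp × mp special dephased log-Hadamard matrix with entries in Z/pZ of rank 3 over the field Z/pZ, then there exists a matrix M ∈ (Z/pZ)^{mp × mp} with rows b_0, b_1, b_2, b_3, …, b_{mp−1} such that: (1) M is log-Hadamard; (2) the first row b_0 and the first column of M are identically 0; (3) b_1 = (0,1,…,p−1,0,1,…,p−1,…,0,1,…,p−1) (m consecutive copies of (0,1,…,p−1)); (4) the first two entries of b_2 are both 0; (5) b_1, b_2, b_3 are linearly independent over Z/pZ; (6) every row of M is a Z/pZ-linear combination of b_1, b_2, b_3; (7) the difference of any two distinct rows of M is balanced. -/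
/-!
Permuting the rows of a log-Hadamard matrix keeps it log-Hadamard, and a suitable permutation already
suffices. In a special dephased matrix the row of index `p` (which exists because `m > 1`) starts with
`0, 0`, since the second column is `k mod p`. It is nonzero, being a row different from the zero
row, so it is not a multiple of `b_1`, whose second entry is `1`. As the rank is `3`, some row
lies outside the span of `b_1` and row `p`; moving these two rows to positions `2` and `3` gives the
matrix, and `b_1, b_2, b_3` span the row space by dimension count.
-/

/-- A vector `v ∈ (ℤ/pℤ)^{mp}` is balanced if every element of `ℤ/pℤ` appears
exactly `m` times as a component of `v`. -/
def BalancedVec (p m : ℕ) (v : Fin (m * p) → ZMod p) : Prop :=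
  ∀ a : ZMod p, (Finset.univ.filter fun k => v k = a).card = m

/-- A matrix `M ∈ (ℤ/pℤ)^{mp × mp}` is log-Hadamard if the difference of any
two distinct rows is balanced. -/
def IsLogHadamard (p m : ℕ) (M : Matrix (Fin (m * p)) (Fin (m * p)) (ZMod p)) : Prop :=
  ∀ i j, i ≠ j → BalancedVec p m (fun k => M i k - M j k)

/-- A matrix is special dephased log-Hadamard if it is log-Hadamard, its first
row and column are identically `0`, and its second row and column both equal
`(0,1,…,p−1,0,1,…,p−1,…,0,1,…,p−1)` (the entry at (0-based) index `k` is `k mod p`). -/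
def IsSpecialDephasedLogHadamard (p m : ℕ)
    (M : Matrix (Fin (m * p)) (Fin (m * p)) (ZMod p)) : Prop :=
  IsLogHadamard p m M ∧
  (∀ i : Fin (m * p), (i : ℕ) = 0 → ∀ j, M i j = 0) ∧
  (∀ j : Fin (m * p), (j : ℕ) = 0 → ∀ i, M i j = 0) ∧
  (∀ i : Fin (m * p), (i : ℕ) = 1 → ∀ j, M i j = ((j : ℕ) : ZMod p)) ∧
  (∀ j : Fin (m * p), (j : ℕ) = 1 → ∀ i, M i j = ((i : ℕ) : ZMod p))

lemma ne_row_of_isLogHadamard {p m : ℕ} (hp : p.Prime) (hm : 0 < m)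
    {M : Matrix (Fin (m * p)) (Fin (m * p)) (ZMod p)} (hM : IsLogHadamard p m M)
    {i j : Fin (m * p)} (hij : i ≠ j) : M i ≠ M j := by
  have := Fact.mk hp
  intro h
  have h1 := hM i j hij 1
  simp [h] at h1
  omega

lemma linearIndependent_triple {K V : Type*} [Field K] [AddCommGroup V] [Module K V]
    {a b c : V} (hab : LinearIndependent K ![a, b]) (hc : c ∉ Submodule.span K {a, b}) :
    LinearIndependent K ![a, b, c] := by
  rw [linearIndependent_finSucc']
  have h1 : Fin.init ![a, b, c] = ![a, b] := by
    ext i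
    fin_cases i <;> rfl
  rw [h1]
  refine ⟨hab, ?_⟩
  simpa [Matrix.range_cons, Set.pair_comm] using hc

lemma exists_perm_two_three {α : Type*} [DecidableEq α] {x₀ x₁ x₂ x₃ P Q : α}
    (h02 : x₀ ≠ x₂) (h03 : x₀ ≠ x₃) (h12 : x₁ ≠ x₂) (h13 : x₁ ≠ x₃) (h23 : x₂ ≠ x₃)
    (h0P : x₀ ≠ P) (h0Q : x₀ ≠ Q) (h1P : x₁ ≠ P) (h1Q : x₁ ≠ Q) (hPQ : P ≠ Q) :
    ∃ σ : Equiv.Perm α, σ x₀ = x₀ ∧ σ x₁ = x₁ ∧ σ x₂ = P ∧ σ x₃ = Q := by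
  refine ⟨Equiv.swap x₂ P * Equiv.swap x₃ (Equiv.swap x₂ P Q), ?_, ?_, ?_, ?_⟩ <;>
    simp only [Equiv.Perm.mul_apply, Equiv.swap_apply_def] <;> grind

/-- If there exists an `mp × mp` special dephased log-Hadamard matrix of rank 3
over `ℤ/pℤ` (with `1 < m < p`), then there exists a log-Hadamard matrix `M`
whose rows `b_0, b_1, b_2, b_3, …` satisfy: `b_0` and the first column are `0`;
`b_1 = (0,1,…,p−1,0,…,p−1,…)`; the first two entries of `b_2` are `0`;
`b_1, b_2, b_3` are linearly independent; every row is a linear combination of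
`b_1, b_2, b_3`; and the difference of any two distinct rows is balanced. -/
theorem exists_normalized_logHadamard_of_special_dephased (p m : ℕ) (hp : p.Prime)
    (hm1 : 1 < m) (hmp : m < p)
    (h : ∃ M : Matrix (Fin (m * p)) (Fin (m * p)) (ZMod p),
        IsSpecialDephasedLogHadamard p m M ∧ M.rank = 3) :
    ∃ M : Matrix (Fin (m * p)) (Fin (m * p)) (ZMod p),
      -- (1) `M` is log-Hadamard
      IsLogHadamard p m M ∧
      -- (2) the row `b_0` and the first column are identically `0`
      (∀ i : Fin (m * p), (i : ℕ) = 0 → ∀ j, M i j = 0) ∧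
      (∀ j : Fin (m * p), (j : ℕ) = 0 → ∀ i, M i j = 0) ∧
      -- (3) `b_1 = (0,1,…,p−1,0,1,…,p−1,…,0,1,…,p−1)`
      (∀ i : Fin (m * p), (i : ℕ) = 1 → ∀ j, M i j = ((j : ℕ) : ZMod p)) ∧
      -- (4) the first two entries of `b_2` are `0`
      (∀ i : Fin (m * p), (i : ℕ) = 2 →
        ∀ j : Fin (m * p), (j : ℕ) = 0 ∨ (j : ℕ) = 1 → M i j = 0) ∧
      -- (5) `b_1, b_2, b_3` are linearly independent
      (∀ i1 i2 i3 : Fin (m * p), (i1 : ℕ) = 1 → (i2 : ℕ) = 2 → (i3 : ℕ) = 3 →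
        LinearIndependent (ZMod p) ![M i1, M i2, M i3]) ∧
      -- (6) every row is a linear combination of `b_1, b_2, b_3`
      (∀ i1 i2 i3 : Fin (m * p), (i1 : ℕ) = 1 → (i2 : ℕ) = 2 → (i3 : ℕ) = 3 →
        ∀ i, M i ∈ Submodule.span (ZMod p) {M i1, M i2, M i3}) ∧
      -- (7) the difference of any two distinct rows is balanced
      (∀ i j, i ≠ j → BalancedVec p m (fun k => M i k - M j k)) := by
  obtain ⟨M, ⟨hH, hr0, hc0, hr1, hc1⟩, hrank⟩ := h
  have := Fact.mk hp
  have hn : 2 * p ≤ m * p := Nat.mul_le_mul_right p hm1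
  set x0 : Fin (m * p) := ⟨0, by omega⟩ with hx0
  set x1 : Fin (m * p) := ⟨1, by omega⟩ with hx1
  set x2 : Fin (m * p) := ⟨2, by omega⟩ with hx2
  set x3 : Fin (m * p) := ⟨3, by omega⟩ with hx3
  set P : Fin (m * p) := ⟨p, by omega⟩ with hP
  have hP1 : M P x1 = 0 := by rw [hc1 x1 rfl]; simp [hP]
  have h11 : M x1 x1 = 1 := by rw [hc1 x1 rfl]; simp [hx1]
  have hM0 : M x0 = 0 := funext (hr0 x0 rfl)
  have hP0 : M P ≠ 0 := by
    rw [← hM0]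
    refine ne_row_of_isLogHadamard hp (by omega) hH ?_
    simp only [hP, hx0, ne_eq, Fin.mk.injEq]; omega
  have hpair : LinearIndependent (ZMod p) ![M x1, M P] := by
    rw [LinearIndependent.pair_iff]
    intro s t hst
    -- The second entry isolates the coefficient of `b_1`.
    have hs : s = 0 := by simpa [hP1, h11] using congrFun hst x1
    subst hs
    simpa [hP0] using hst
  obtain ⟨Q, hQ⟩ : ∃ Q, M Q ∉ Submodule.span (ZMod p) {M x1, M P} := by
    by_contra! hall
    have hle : Submodule.span (ZMod p) (Set.range M.row) ≤
        Submodule.span (ZMod p) {M x1, M P} := by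
      rw [Submodule.span_le]
      rintro _ ⟨i, rfl⟩
      exact hall i
    have h1 := Submodule.finrank_mono hle
    rw [← Matrix.rank_eq_finrank_span_row, hrank] at h1
    have h2 := finrank_span_eq_card hpair
    rw [Matrix.range_cons, Matrix.range_cons, Matrix.range_empty, Set.union_empty,
      Set.singleton_union, Fintype.card_fin] at h2
    omega
  have htri := linearIndependent_triple hpair hQ
  have hspan : ∀ i, M i ∈ Submodule.span (ZMod p) {M x1, M P, M Q} := by
    have hset : Set.range ![M x1, M P, M Q] = {M x1, M P, M Q} := by
      simp only [Matrix.range_cons, Matrix.range_empty, Set.union_empty, Set.singleton_union]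
    have hle : Submodule.span (ZMod p) {M x1, M P, M Q} ≤
        Submodule.span (ZMod p) (Set.range M.row) := by
      refine Submodule.span_mono ?_
      rintro _ (rfl | rfl | rfl)
      exacts [⟨x1, rfl⟩, ⟨P, rfl⟩, ⟨Q, rfl⟩]
    have h2 := finrank_span_eq_card htri
    rw [hset, Fintype.card_fin] at h2
    have heq := Submodule.eq_of_le_of_finrank_eq hle
      (by rw [h2, ← Matrix.rank_eq_finrank_span_row, hrank])
    intro i
    rw [heq]
    exact Submodule.subset_span ⟨i, rfl⟩
  have hQ0 : x0 ≠ Q := by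
    rintro h
    rw [← h, hM0] at hQ
    exact hQ (Submodule.zero_mem _)
  have hQ1 : x1 ≠ Q := by
    rintro h
    rw [← h] at hQ
    exact hQ (Submodule.subset_span (by simp))
  have hQP : P ≠ Q := by
    rintro h
    rw [← h] at hQ
    exact hQ (Submodule.subset_span (by simp))
  obtain ⟨σ, hσ0, hσ1, hσ2, hσ3⟩ : ∃ σ : Equiv.Perm (Fin (m * p)),
      σ x0 = x0 ∧ σ x1 = x1 ∧ σ x2 = P ∧ σ x3 = Q := by
    refine exists_perm_two_three ?_ ?_ ?_ ?_ ?_ ?_ hQ0 ?_ hQ1 hQP <;>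
      simp only [hx0, hx1, hx2, hx3, hP, ne_eq, Fin.mk.injEq] <;> omega
  have hlog : IsLogHadamard p m (fun i => M (σ i)) :=
    fun i j hij => hH (σ i) (σ j) (σ.injective.ne hij)
  refine ⟨fun i => M (σ i), hlog, ?_, fun j hj i => hc0 j hj _, ?_, ?_, ?_, ?_, hlog⟩
  · intro i hi j
    obtain rfl : i = x0 := Fin.ext hi
    simp only [hσ0, hM0, Pi.zero_apply]
  · intro i hi j
    obtain rfl : i = x1 := Fin.ext hi
    simp only [hσ1]
    exact hr1 x1 rfl j
  · rintro i hi j (hj | hj)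
    · exact hc0 j hj _
    · obtain rfl : i = x2 := Fin.ext hi
      obtain rfl : j = x1 := Fin.ext hj
      simp only [hσ2, hP1]
  · intro i1 i2 i3 h1 h2 h3
    obtain rfl : i1 = x1 := Fin.ext h1
    obtain rfl : i2 = x2 := Fin.ext h2
    obtain rfl : i3 = x3 := Fin.ext h3
    simp only [hσ1, hσ2, hσ3]
    exact htri
  · intro i1 i2 i3 h1 h2 h3 i
    obtain rfl : i1 = x1 := Fin.ext h1
    obtain rfl : i2 = x2 := Fin.ext h2
    obtain rfl : i3 = x3 := Fin.ext h3
    simp only [hσ1, hσ2, hσ3]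
    exact hspan (σ i)
end

section
/- Every 3 × 3 Davey matrix is symmetric; that is, if X is a 3 × 3 matrix of nonnegative integers whose three row sums, three column sums, and three wrapped diagonal sums Σ_{i ∈ Z/3Z} X_{i,i+s} (for s = 0, 1, 2, indices mod 3) are all equal to the same number m, then X_{i,j} = X_{j,i} for all i, j. -/
/-- Every `3 × 3` Davey matrix is symmetric: if all row sums, column sums and
wrapped diagonal sums `∑ i, X i (i + s)` of a `3 × 3` matrix `X` of nonnegative
integers equal the same number `m`, then `X` is symmetric. -/
theorem davey_three_symmetric (m : ℕ) (X : Matrix (ZMod 3) (ZMod 3) ℕ)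
    (hrow : ∀ i : ZMod 3, ∑ j : ZMod 3, X i j = m)
    (hcol : ∀ j : ZMod 3, ∑ i : ZMod 3, X i j = m)
    (hdiag : ∀ s : ZMod 3, ∑ i : ZMod 3, X i (i + s) = m) :
    ∀ i j : ZMod 3, X i j = X j i := by
  -- Split every sum over `ZMod 3 = Fin 3` into its three terms.
  have sum3 : ∀ f : ZMod 3 → ℕ, ∑ i : ZMod 3, f i = f 0 + f 1 + f 2 :=
    fun f => Fin.sum_univ_three f
  simp only [sum3] at hrow hcol hdiag
  have r0 := hrow 0
  have r1 := hrow 1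
  have c0 := hcol 0
  have c1 := hcol 1
  have d1 : X 0 1 + X 1 2 + X 2 0 = m := hdiag 1
  have d2 : X 0 2 + X 1 0 + X 2 1 = m := hdiag 2
  -- Rows against columns make the antisymmetric part circulant:
  -- `X 0 1 - X 1 0 = X 1 2 - X 2 1 = X 2 0 - X 0 2`.
  -- Comparing the diagonals `s = 1` and `s = 2`, these three differences sum to `0`,
  -- so each of them vanishes.
  have h01 : X 0 1 = X 1 0 := by omega
  have h02 : X 0 2 = X 2 0 := by omega
  have h12 : X 1 2 = X 2 1 := by omega
  intro i j
  fin_cases i <;> fin_cases j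
  exacts [rfl, h01, h02, h01.symm, rfl, h12, h02.symm, h12.symm, rfl]
end
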